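/- Let 𝒳, 𝒴 be Polish spaces, μ ∈ 𝒫(𝒳), ν ∈ 𝒫(𝒴), and C : 𝒳 × 𝒫(𝒴) → ℝ̄ measurable such that all the integrals below are well-defined. Then the infimum of E[C(X, ℒ(Y|ℱ₁))] over all filtered probability spaces with filtration (ℱ_t)_{t=1}^2 carrying random variables X ∼ μ (ℱ₁-measurable) and Y ∼ ν (ℱ₂-measurable) equals inf_{P ∈ Λ(μ,ν)} ∫ C(x,p) P(dx,dp). -/

import Mathlib

open MeasureTheory Set Filter
open scoped ENNReal NNReal Topology RealInnerProductSpace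

noncomputable section

namespace WOT

/-- The set of couplings of `μ` and `ν`. -/
def Couplings {X Y : Type*} [MeasurableSpace X] [MeasurableSpace Y]
    (μ : Measure X) (ν : Measure Y) : Set (Measure (X × Y)) :=
  {π | π.map Prod.fst = μ ∧ π.map Prod.snd = ν}

/-- `K` is a disintegration of `π` with respect to its first marginal `μ`. -/
def IsDisint {X Y : Type*} [MeasurableSpace X] [MeasurableSpace Y]
    (π : Measure (X × Y)) (μ : Measure X) (K : X → Measure Y) : Prop :=
  Measurable K ∧ (∀ x, IsProbabilityMeasure (K x)) ∧
    ∀ s : Set (X × Y), MeasurableSet s → π s = ∫⁻ x, K x (Prod.mk x ⁻¹' s) ∂μ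

/-- The intensity `I(Q)` of a measure on measures. -/
def intensity {Y : Type*} [MeasurableSpace Y] (Q : Measure (Measure Y)) : Measure Y :=
  Q.join

/-- The intensity map `Î`. -/
def intensityHat {X Y : Type*} [MeasurableSpace X] [MeasurableSpace Y]
    (P : Measure (X × Measure Y)) : Measure (X × Y) :=
  P.bind fun xp => (Measure.dirac xp.1).prod xp.2

/-- `Λ(μ,ν)`, the set of probability measures on `X × 𝒫(Y)` whose intensity is a coupling. -/
def Lambda {X Y : Type*} [MeasurableSpace X] [MeasurableSpace Y]
    (μ : Measure X) (ν : Measure Y) : Set (Measure (X × Measure Y)) :=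
  {P | IsProbabilityMeasure P ∧ (∀ᵐ xp ∂P, IsProbabilityMeasure xp.2) ∧
    intensityHat P ∈ Couplings μ ν}

/-- Finite `r`-th moment. -/
def FinMom {X : Type*} [MeasurableSpace X] [PseudoMetricSpace X]
    (r : ℝ) (x₀ : X) (μ : Measure X) : Prop :=
  ∫⁻ x, ENNReal.ofReal (dist x x₀ ^ r) ∂μ < ⊤

/-- The growth class `Φ_r`. -/
def PhiR {X : Type*} [PseudoMetricSpace X] (r : ℝ) (x₀ : X) : Set (X → ℝ) :=
  {φ | Continuous φ ∧ ∃ K : ℝ, ∀ x, |φ x| ≤ K * (1 + dist x x₀ ^ r)}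

/-- The `r`-Wasserstein distance (valued in `ℝ≥0∞`). -/
def Wr {Y : Type*} [MeasurableSpace Y] [PseudoMetricSpace Y]
    (r : ℝ) (p q : Measure Y) : ℝ≥0∞ :=
  ⨅ π ∈ Couplings p q, (∫⁻ z : Y × Y, ENNReal.ofReal (dist z.1 z.2 ^ r) ∂π) ^ (1 / r)

/-- `𝒫_r(Y)`: probability measures with finite `r`-th moment. -/
def Pr {Y : Type*} [MeasurableSpace Y] [PseudoMetricSpace Y] (r : ℝ) (y₀ : Y) :
    Set (Measure Y) :=
  {p | IsProbabilityMeasure p ∧ FinMom r y₀ p}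

/-- `𝒫_r(𝒫_r(Y))`: probability measures on `𝒫_r(Y)` with finite `r`-th moment w.r.t. `𝒲_r`. -/
def PrP {Y : Type*} [MeasurableSpace Y] [PseudoMetricSpace Y] (r : ℝ) (y₀ : Y) :
    Set (Measure (Measure Y)) :=
  {Q | IsProbabilityMeasure Q ∧ (∀ᵐ p ∂Q, p ∈ Pr r y₀) ∧
    ∫⁻ p, Wr r p (Measure.dirac y₀) ^ r ∂Q < ⊤}

/-- The positive part of an extended real, valued in `ℝ≥0∞`. -/
def epos (e : EReal) : ℝ≥0∞ := if e = ⊤ then ⊤ else ENNReal.ofReal e.toReal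

/-- Extended-real integral: positive part minus negative part (with value `⊥` when
both parts are infinite, i.e. when the integral is not well-defined). -/
def eInt {X : Type*} [MeasurableSpace X] (f : X → EReal) (μ : Measure X) : EReal :=
  ((∫⁻ x, epos (f x) ∂μ : ℝ≥0∞) : EReal) - ((∫⁻ x, epos (-(f x)) ∂μ : ℝ≥0∞) : EReal)

/-- Extended-real integral with the opposite (`⊤`) convention for ill-defined integrals. -/
def eIntU {X : Type*} [MeasurableSpace X] (f : X → EReal) (μ : Measure X) : EReal :=
  -eInt (fun x => -(f x)) μ

/-- The extended-real integral is well-defined. -/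
def eIntWellDef {X : Type*} [MeasurableSpace X] (f : X → EReal) (μ : Measure X) : Prop :=
  (∫⁻ x, epos (f x) ∂μ ≠ ⊤) ∨ (∫⁻ x, epos (-(f x)) ∂μ ≠ ⊤)

/-- Convergence in the `r`-Wasserstein distance. -/
def WrTendsto {Y : Type*} [MeasurableSpace Y] [PseudoMetricSpace Y]
    (r : ℝ) (ps : ℕ → Measure Y) (p : Measure Y) : Prop :=
  Tendsto (fun n => Wr r (ps n) p) atTop (nhds 0)

/-- (Sequential) lower semicontinuity on `𝒫_r(Y)` w.r.t. `𝒲_r`. -/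
def LscWr1 {Y : Type*} [MeasurableSpace Y] [PseudoMetricSpace Y]
    (r : ℝ) (y₀ : Y) (G : Measure Y → EReal) : Prop :=
  ∀ (p : Measure Y) (ps : ℕ → Measure Y), p ∈ Pr r y₀ → (∀ n, ps n ∈ Pr r y₀) →
    WrTendsto r ps p → G p ≤ liminf (fun n => G (ps n)) atTop

/-- (Sequential) upper semicontinuity on `𝒫_r(Y)` w.r.t. `𝒲_r`. -/
def UscWr1 {Y : Type*} [MeasurableSpace Y] [PseudoMetricSpace Y]
    (r : ℝ) (y₀ : Y) (G : Measure Y → EReal) : Prop :=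
  ∀ (p : Measure Y) (ps : ℕ → Measure Y), p ∈ Pr r y₀ → (∀ n, ps n ∈ Pr r y₀) →
    WrTendsto r ps p → limsup (fun n => G (ps n)) atTop ≤ G p

/-- (Sequential) lower semicontinuity on `X × 𝒫_r(Y)` w.r.t. `d_X × 𝒲_r`. -/
def LscWr {X Y : Type*} [TopologicalSpace X] [MeasurableSpace Y] [PseudoMetricSpace Y]
    (r : ℝ) (y₀ : Y) (C : X × Measure Y → EReal) : Prop :=
  ∀ (x : X) (xs : ℕ → X) (p : Measure Y) (ps : ℕ → Measure Y),
    p ∈ Pr r y₀ → (∀ n, ps n ∈ Pr r y₀) → Tendsto xs atTop (nhds x) → WrTendsto r ps p →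
    C (x, p) ≤ liminf (fun n => C (xs n, ps n)) atTop

/-- (Sequential) continuity of a real-valued cost on `X × 𝒫_r(Y)` w.r.t. `d_X × 𝒲_r`. -/
def ContWr {X Y : Type*} [TopologicalSpace X] [MeasurableSpace Y] [PseudoMetricSpace Y]
    (r : ℝ) (y₀ : Y) (C : X × Measure Y → ℝ) : Prop :=
  ∀ (x : X) (xs : ℕ → X) (p : Measure Y) (ps : ℕ → Measure Y),
    p ∈ Pr r y₀ → (∀ n, ps n ∈ Pr r y₀) → Tendsto xs atTop (nhds x) → WrTendsto r ps p →
    Tendsto (fun n => C (xs n, ps n)) atTop (nhds (C (x, p)))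

/-- Convexity of an extended-real-valued function on a set of measures. -/
def EConvexOn {Y : Type*} [MeasurableSpace Y] (S : Set (Measure Y)) (G : Measure Y → EReal) :
    Prop :=
  ∀ p ∈ S, ∀ q ∈ S, ∀ t : ℝ≥0, t ≤ 1 →
    G ((t : ℝ≥0∞) • p + ((1 - t : ℝ≥0) : ℝ≥0∞) • q)
      ≤ ((t : ℝ) : EReal) * G p + (((1 - t : ℝ≥0) : ℝ) : EReal) * G q

/-- The lower semicontinuous convex envelope (on `𝒫_r(Y)` w.r.t. `𝒲_r`). -/
def cvxEnvWr {Y : Type*} [MeasurableSpace Y] [PseudoMetricSpace Y]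
    (r : ℝ) (y₀ : Y) (f : Measure Y → EReal) : Measure Y → EReal :=
  fun p => ⨆ G ∈ {G : Measure Y → EReal |
    LscWr1 r y₀ G ∧ EConvexOn (Pr r y₀) G ∧ ∀ q ∈ Pr r y₀, G q ≤ f q}, G p

/-- The cost `C̃(x,p) = inf {∫ C(x,q) Q(dq) : Q ∈ 𝒫_r(𝒫_r(Y)), I(Q) = p}`. -/
def tildeC {X Y : Type*} [MeasurableSpace X] [MeasurableSpace Y] [PseudoMetricSpace Y]
    (r : ℝ) (y₀ : Y) (C : X × Measure Y → EReal) : X × Measure Y → EReal :=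
  fun xp => ⨅ Q ∈ {Q | Q ∈ PrP r y₀ ∧ intensity Q = xp.2}, eInt (fun q => C (xp.1, q)) Q

/-- The barycenter of a measure on a normed space. -/
def bary {E : Type*} [NormedAddCommGroup E] [NormedSpace ℝ E] [MeasurableSpace E]
    (p : Measure E) : E :=
  ∫ y, y ∂p

/-- Convex order of measures. -/
def ConvexOrder {E : Type*} [NormedAddCommGroup E] [NormedSpace ℝ E] [MeasurableSpace E]
    (ν' ν : Measure E) : Prop :=
  ∀ θ : E → ℝ, ConvexOn ℝ Set.univ θ →
    eInt (fun y => ((θ y : ℝ) : EReal)) ν' ≤ eInt (fun y => ((θ y : ℝ) : EReal)) ν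

/-- The inf-convolution `R_C ψ`. -/
def RC {X Y : Type*} [MeasurableSpace Y] [PseudoMetricSpace Y]
    (r : ℝ) (y₀ : Y) (C : X × Measure Y → EReal) (ψ : Y → ℝ) : X → EReal :=
  fun x => ⨅ p ∈ Pr r y₀, (((-∫ y, ψ y ∂p : ℝ) : EReal) + C (x, p))

/-- `κ` is a regular conditional distribution of `Yv` given the sub-σ-algebra `m1`. -/
def IsRCD {Ω Y : Type*} [MeasurableSpace Y] (m1 : MeasurableSpace Ω)
    (mΩ : MeasurableSpace Ω) (P : @Measure Ω mΩ) (Yv : Ω → Y) (κ : Ω → Measure Y) : Prop :=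
  (∀ ω, IsProbabilityMeasure (κ ω)) ∧ Measurable[m1] κ ∧
    ∀ A : Set Y, MeasurableSet A → ∀ B : Set Ω, MeasurableSet[m1] B →
      P (B ∩ Yv ⁻¹' A) = ∫⁻ ω in B, κ ω A ∂P

end WOT

open WOT

universe u v

open ProbabilityTheory

lemma epos_measurable : Measurable epos := by
  unfold epos
  exact Measurable.ite (measurableSet_singleton _) measurable_const
    (ENNReal.measurable_ofReal.comp measurable_ereal_toReal)

lemma eInt_map' {A B : Type*} [MeasurableSpace A] [MeasurableSpace B] (P : Measure A)
    (g : A → B) (hg : Measurable g) (C : B → EReal) (hC : Measurable C) :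
    eInt C (P.map g) = eInt (fun a => C (g a)) P := by
  unfold eInt
  have h1 : Measurable fun b => epos (C b) := epos_measurable.comp hC
  have h2 : Measurable fun b => epos (-(C b)) :=
    epos_measurable.comp (continuous_neg.measurable.comp hC)
  rw [lintegral_map h1 hg, lintegral_map h2 hg]

lemma eInt_congr' {A : Type*} [MeasurableSpace A] (P : Measure A)
    (f g : A → EReal) (h : ∀ᵐ a ∂P, f a = g a) : eInt f P = eInt g P := by
  unfold eInt
  have h1 : ∫⁻ a, epos (f a) ∂P = ∫⁻ a, epos (g a) ∂P :=
    lintegral_congr_ae (h.mono fun a ha => by simp only [ha])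
  have h2 : ∫⁻ a, epos (-(f a)) ∂P = ∫⁻ a, epos (-(g a)) ∂P :=
    lintegral_congr_ae (h.mono fun a ha => by simp only [ha])
  rw [h1, h2]

lemma measurableSet_prob {Y : Type*} [MeasurableSpace Y] :
    MeasurableSet {p : Measure Y | p univ = 1} :=
  Measure.measurable_coe MeasurableSet.univ (measurableSet_singleton 1)

open Classical in
/-- kernel replacing non-probability measures by `ν`. -/
def fixK (X : Type*) {Y : Type*} [MeasurableSpace X] [MeasurableSpace Y] (ν : Measure Y) :
    Kernel (X × Measure Y) Y where
  toFun xp := if xp.2 ∈ {p : Measure Y | p univ = 1} then xp.2 else ν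
  measurable' := Measurable.ite (measurable_snd measurableSet_prob) measurable_snd
    measurable_const

lemma fixK_eq {X Y : Type*} [MeasurableSpace X] [MeasurableSpace Y] (ν : Measure Y)
    (xp : X × Measure Y) (h : IsProbabilityMeasure xp.2) : fixK X ν xp = xp.2 :=
  if_pos h.measure_univ

instance fixK_markov {X Y : Type*} [MeasurableSpace X] [MeasurableSpace Y] (ν : Measure Y)
    [IsProbabilityMeasure ν] : IsMarkovKernel (fixK X ν) := by
  refine ⟨fun xp => ?_⟩
  change IsProbabilityMeasure (if xp.2 ∈ {p : Measure Y | p univ = 1} then xp.2 else ν)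
  split_ifs with h
  · exact ⟨h⟩
  · infer_instance

lemma hat_eq {X Y : Type*} [MeasurableSpace X] [MeasurableSpace Y] (ν : Measure Y)
    [IsProbabilityMeasure ν] (P : Measure (X × Measure Y))
    (h : ∀ᵐ xp ∂P, IsProbabilityMeasure xp.2) :
    intensityHat P
      = P.bind ((Kernel.deterministic (Prod.fst : X × Measure Y → X) measurable_fst)
          ×ₖ (fixK X ν)) := by
  unfold intensityHat
  apply Measure.bind_congr_right
  filter_upwards [h] with xp hxp
  rw [Kernel.prod_apply, Kernel.deterministic_apply, fixK_eq ν xp hxp]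

lemma hat_fst {X Y : Type*} [MeasurableSpace X] [MeasurableSpace Y] (ν : Measure Y)
    [IsProbabilityMeasure ν] (P : Measure (X × Measure Y))
    (h : ∀ᵐ xp ∂P, IsProbabilityMeasure xp.2) :
    (intensityHat P).map Prod.fst = P.map Prod.fst := by
  rw [hat_eq ν P h]
  ext A hA
  rw [Measure.map_apply measurable_fst hA, Measure.map_apply measurable_fst hA,
    Measure.bind_apply (measurable_fst hA) (Kernel.aemeasurable _),
    ← lintegral_indicator_one (measurable_fst hA)]
  refine lintegral_congr fun xp => ?_
  rw [Kernel.prod_apply, ← Set.prod_univ, Measure.prod_prod, Kernel.deterministic_apply,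
    Measure.dirac_apply' _ hA, measure_univ, mul_one]
  rfl

lemma hat_snd {X Y : Type*} [MeasurableSpace X] [MeasurableSpace Y] (ν : Measure Y)
    [IsProbabilityMeasure ν] (P : Measure (X × Measure Y))
    (h : ∀ᵐ xp ∂P, IsProbabilityMeasure xp.2) (A : Set Y) (hA : MeasurableSet A) :
    (intensityHat P).map Prod.snd A = ∫⁻ xp, fixK X ν xp A ∂P := by
  rw [hat_eq ν P h]
  rw [Measure.map_apply measurable_snd hA,
    Measure.bind_apply (measurable_snd hA) (Kernel.aemeasurable _)]
  refine lintegral_congr fun xp => ?_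
  rw [Kernel.prod_apply, ← Set.univ_prod, Measure.prod_prod, measure_univ, one_mul]

lemma dir1 {Ω X Y : Type*} [MeasurableSpace X] [MeasurableSpace Y]
    (μ : Measure X) (ν : Measure Y) [IsProbabilityMeasure ν]
    (C : X × Measure Y → EReal) (hC : Measurable C)
    (m1 m2 : MeasurableSpace Ω) (hm : m1 ≤ m2) (P : @Measure Ω m2) (Xv : Ω → X) (Yv : Ω → Y)
    (κ : Ω → Measure Y) (hP : IsProbabilityMeasure P) (hX : Measurable[m1] Xv)
    (hY : Measurable[m2] Yv) (hμ : P.map Xv = μ) (hν : P.map Yv = ν)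
    (hκ : IsRCD m1 m2 P Yv κ) :
    ∃ Q ∈ Lambda μ ν, eInt (fun ω => C (Xv ω, κ ω)) P = eInt C Q := by
  obtain ⟨h1, h2, h3⟩ := hκ
  have hX' : Measurable[m2] Xv := hX.mono hm le_rfl
  have hκ' : Measurable[m2] κ := h2.mono hm le_rfl
  have hg : Measurable (fun ω => (Xv ω, κ ω)) := hX'.prodMk hκ'
  have hae : ∀ᵐ xp ∂(P.map (fun ω => (Xv ω, κ ω))), IsProbabilityMeasure xp.2 := by
    have : ∀ᵐ xp ∂(P.map (fun ω => (Xv ω, κ ω))), xp.2 ∈ {p : Measure Y | p univ = 1} := by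
      rw [ae_map_iff hg.aemeasurable (measurable_snd measurableSet_prob)]
      exact ae_of_all _ fun ω => (h1 ω).measure_univ
    exact this.mono fun xp h => ⟨h⟩
  refine ⟨P.map (fun ω => (Xv ω, κ ω)),
    ⟨Measure.isProbabilityMeasure_map hg.aemeasurable, hae, ?_, ?_⟩,
    (eInt_map' P _ hg C hC).symm⟩
  · rw [hat_fst ν _ hae, Measure.map_map measurable_fst hg]
    exact hμ
  · ext A hA
    rw [hat_snd ν _ hae A hA, lintegral_map (Kernel.measurable_coe _ hA) hg, ← hν,
      Measure.map_apply hY hA]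
    have := h3 A hA univ MeasurableSet.univ
    rw [univ_inter, Measure.restrict_univ] at this
    rw [this]
    refine lintegral_congr fun ω => ?_
    rw [fixK_eq _ _ (h1 ω)]

lemma dir2 {X Y : Type*} [MeasurableSpace X] [MeasurableSpace Y]
    (μ : Measure X) (ν : Measure Y) [IsProbabilityMeasure ν]
    (C : X × Measure Y → EReal) (hC : Measurable C)
    (Q : Measure (X × Measure Y)) (hQ : Q ∈ Lambda μ ν) :
    ∃ (m1 m2 : MeasurableSpace ((X × Measure Y) × Y)), m1 ≤ m2 ∧
        ∃ (P : @Measure ((X × Measure Y) × Y) m2) (Xv : ((X × Measure Y) × Y) → X)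
          (Yv : ((X × Measure Y) × Y) → Y) (κ : ((X × Measure Y) × Y) → Measure Y),
          @IsProbabilityMeasure _ m2 P ∧ Measurable[m1] Xv ∧ Measurable[m2] Yv ∧
          @Measure.map _ X m2 _ Xv P = μ ∧ @Measure.map _ Y m2 _ Yv P = ν ∧
          IsRCD m1 m2 P Yv κ ∧ eInt C Q = @eInt _ m2 (fun ω => C (Xv ω, κ ω)) P := by
  obtain ⟨hp, hae, hμ, hν⟩ := hQ
  rw [hat_fst ν _ hae] at hμ
  have hfst : (Q ⊗ₘ fixK X ν).map Prod.fst = Q := Measure.fst_compProd Q (fixK X ν)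
  refine ⟨MeasurableSpace.comap Prod.fst inferInstance, inferInstance, measurable_fst.comap_le,
    Q ⊗ₘ fixK X ν, fun z => z.1.1, fun z => z.2, fun z => fixK X ν z.1, inferInstance,
    measurable_fst.comp (comap_measurable _), measurable_snd, ?_, ?_,
    ⟨fun z => inferInstance, (fixK X ν).measurable.comp (comap_measurable _), ?_⟩, ?_⟩
  · rw [← hμ]
    conv_rhs => rw [← hfst]
    rw [Measure.map_map measurable_fst measurable_fst]
    rfl
  · refine Eq.trans ?_ hν
    ext A hA
    rw [hat_snd ν _ hae A hA, Measure.map_apply measurable_snd hA,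
      Measure.compProd_apply (measurable_snd hA)]
    rfl
  · rintro A hA _ ⟨B, hB, rfl⟩
    have e : (Prod.fst ⁻¹' B ∩ (fun z : (X × Measure Y) × Y => z.2) ⁻¹' A) = B ×ˢ A := rfl
    rw [e, Measure.compProd_apply_prod hB hA]
    conv_lhs => rw [← hfst]
    rw [setLIntegral_map hB (Kernel.measurable_coe _ hA) measurable_fst]
  · have hm : Measurable fun xp : X × Measure Y => C (xp.1, fixK X ν xp) :=
      hC.comp (measurable_fst.prodMk (fixK X ν).measurable)
    have := eInt_map' (Q ⊗ₘ fixK X ν) Prod.fst measurable_fst _ hm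
    rw [← this, hfst]
    apply eInt_congr'
    filter_upwards [hae] with xp h
    rw [fixK_eq ν xp h]

/-- the weak transport problem over filtered processes equals the relaxed
problem over `Λ(μ,ν)` (Corollary `cor.w'`). -/
theorem statement4 {X : Type u} {Y : Type v}
    [MeasurableSpace X] [MetricSpace X] [CompleteSpace X] [SecondCountableTopology X]
    [BorelSpace X]
    [MeasurableSpace Y] [MetricSpace Y] [CompleteSpace Y] [SecondCountableTopology Y]
    [BorelSpace Y]
    (μ : Measure X) (ν : Measure Y) [IsProbabilityMeasure μ] [IsProbabilityMeasure ν]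
    (C : X × Measure Y → EReal) (hC : Measurable C)
    (hwell : ∀ P ∈ Lambda μ ν, eIntWellDef C P)
    (hwell' : ∀ (Ω : Type (max u v)) (m1 m2 : MeasurableSpace Ω), m1 ≤ m2 →
      ∀ (P : @Measure Ω m2) (Xv : Ω → X) (Yv : Ω → Y) (κ : Ω → Measure Y),
        @IsProbabilityMeasure Ω m2 P → Measurable[m1] Xv → Measurable[m2] Yv →
        @Measure.map Ω X m2 _ Xv P = μ → @Measure.map Ω Y m2 _ Yv P = ν →
        IsRCD m1 m2 P Yv κ → @eIntWellDef Ω m2 (fun ω => C (Xv ω, κ ω)) P) :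
    sInf {v : EReal | ∃ (Ω : Type (max u v)) (m1 m2 : MeasurableSpace Ω), m1 ≤ m2 ∧
        ∃ (P : @Measure Ω m2) (Xv : Ω → X) (Yv : Ω → Y) (κ : Ω → Measure Y),
          @IsProbabilityMeasure Ω m2 P ∧ Measurable[m1] Xv ∧ Measurable[m2] Yv ∧
          @Measure.map Ω X m2 _ Xv P = μ ∧ @Measure.map Ω Y m2 _ Yv P = ν ∧
          IsRCD m1 m2 P Yv κ ∧ v = @eInt Ω m2 (fun ω => C (Xv ω, κ ω)) P}
      = sInf {v : EReal | ∃ P ∈ Lambda μ ν, v = eInt C P} := by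
  congr 1
  ext v
  constructor
  · rintro ⟨Ω, m1, m2, hm, P, Xv, Yv, κ, hP, hX, hY, hμ, hν, hκ, rfl⟩
    exact dir1 μ ν C hC m1 m2 hm P Xv Yv κ hP hX hY hμ hν hκ
  · rintro ⟨Q, hQ, rfl⟩
    exact ⟨(X × Measure Y) × Y, dir2 μ ν C hC Q hQ⟩
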